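/- arXiv:2202.08308 — 2 statements merged into one kernel-verified Lean document; each statement's English description precedes it below -/
import Mathlib

section
/- Let n be any positive integer, λ any infinite cardinal, and A an arbitrary countably infinite subset of λ. If 𝓘_λ^n carries an ω-bounded-pracompact shift-continuous T₁-topology (so it is an ω-bounded-pracompact T₁-semitopological semigroup), then 𝓘_A^n ∖ 𝓘_A^{n−1} is a dense subset of the subspace 𝓘_A^n, and consequently the subspace 𝓘_A^n is compact. -/
/-!
For a pair `p = (x, y)`, the set of elements whose graph contains `p` is clopen: the continuous map
`β ↦ ε_x β ε_y`, with `ε_x` the identity of `{x}`, takes only the values `{p}` and `𝟎`, the former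
exactly when `p ∈ β`, and points are closed. Hence `𝓘_λ^n` is Hausdorff, `𝓘_A^n` is closed, and
elements of rank `n`, being maximal, are isolated.

If the elements `u i` all extend `α` and no pair outside `α` lies in two of them, then `α` is the
only possible cluster point of `u`, so `u` converges to `α` as soon as it stays in a compact set.
For infinite `A`, every `α ∈ 𝓘_A^n` is the kernel of such a sequence of elements of rank `n` in
`𝓘_A^n`. These are isolated, so feeble ω-boundedness, a consequence of ω-bounded-pracompactness,
puts them in a compact set, and they converge to `α`.

It follows that every sequence lies in a compact set, hence that every sequence with kernel `α`
converges to `α`. An ultrafilter contains a set of the form `{β | p ∈ β}` exactly for the pairs `p`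
of some `α ∈ 𝓘_λ^n`. If it did not converge to `α`, one of its members would avoid a neighbourhood
of `α` and yet contain a sequence with kernel `α`. So `𝓘_λ^n` is compact.
-/

open Set Topology Filter

/-- The symmetric inverse semigroup `𝓘_γ^n` of partial bijections of the set `γ`
of rank `≤ n`, represented by their (finite) graphs. -/
structure SymInvSg (γ : Type*) (n : ℕ) where
  graph : Set (γ × γ)
  inj' : ∀ ⦃x y x' y'⦄, (x, y) ∈ graph → (x', y') ∈ graph → (x = x' ↔ y = y')
  finite' : graph.Finite
  card_le' : graph.ncard ≤ n

namespace SymInvSg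

variable {γ : Type*} {n : ℕ}

theorem ext' {a b : SymInvSg γ n} (h : a.graph = b.graph) : a = b := by
  cases a; cases b; simpa using h

/-- Composition of partial bijections (in the left-to-right convention of
transformation semigroups, the choice of convention being immaterial). -/
instance : Mul (SymInvSg γ n) where
  mul a b :=
    { graph := {p | ∃ y, (p.1, y) ∈ a.graph ∧ (y, p.2) ∈ b.graph}
      inj' := by
        rintro x z x' z' ⟨y, hxy, hyz⟩ ⟨y', hxy', hyz'⟩
        constructor
        · rintro rfl
          have hy : y = y' := (a.inj' hxy hxy').mp rfl
          subst hy
          exact (b.inj' hyz hyz').mp rfl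
        · rintro rfl
          have hy : y = y' := (b.inj' hyz hyz').mpr rfl
          subst hy
          exact (a.inj' hxy hxy').mpr rfl
      finite' := by
        have : {p : γ × γ | ∃ y, (p.1, y) ∈ a.graph ∧ (y, p.2) ∈ b.graph} ⊆
            (fun q : (γ × γ) × (γ × γ) => (q.1.1, q.2.2)) '' (a.graph ×ˢ b.graph) := by
          rintro ⟨x, z⟩ ⟨y, hxy, hyz⟩
          exact ⟨((x, y), (y, z)), ⟨hxy, hyz⟩, rfl⟩
        exact Set.Finite.subset (Set.Finite.image _ (a.finite'.prod b.finite')) this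
      card_le' := by
        have hinj : Set.InjOn Prod.fst
            {p : γ × γ | ∃ y, (p.1, y) ∈ a.graph ∧ (y, p.2) ∈ b.graph} := by
          rintro ⟨x, z⟩ ⟨y, hxy, hyz⟩ ⟨x', z'⟩ ⟨y', hxy', hyz'⟩ h
          simp only at h
          subst h
          have hy : y = y' := (a.inj' hxy hxy').mp rfl
          subst hy
          have hz : z = z' := (b.inj' hyz hyz').mp rfl
          simp [hz]
        calc ({p : γ × γ | ∃ y, (p.1, y) ∈ a.graph ∧ (y, p.2) ∈ b.graph}).ncard
            ≤ (Prod.fst '' a.graph).ncard := by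
              refine Set.ncard_le_ncard_of_injOn Prod.fst ?_ hinj (a.finite'.image _)
              rintro ⟨x, z⟩ hp
              exact ⟨(x, hp.choose), hp.choose_spec.1, rfl⟩
          _ ≤ a.graph.ncard := Set.ncard_image_le a.finite'
          _ ≤ n := a.card_le' }

theorem mul_graph (a b : SymInvSg γ n) :
    (a * b).graph = {p : γ × γ | ∃ y, (p.1, y) ∈ a.graph ∧ (y, p.2) ∈ b.graph} := rfl

instance : Semigroup (SymInvSg γ n) where
  mul_assoc a b c := by
    refine ext' ?_
    simp only [mul_graph]
    ext ⟨x, w⟩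
    constructor
    · rintro ⟨z, ⟨y, hxy, hyz⟩, hzw⟩
      exact ⟨y, hxy, z, hyz, hzw⟩
    · rintro ⟨y, hxy, z, hyz, hzw⟩
      exact ⟨z, ⟨y, hxy, hyz⟩, hzw⟩

/-- The zero of `𝓘_γ^n` is the empty partial map. -/
instance : Zero (SymInvSg γ n) :=
  ⟨{ graph := ∅
     inj' := by simp
     finite' := Set.finite_empty
     card_le' := by simp }⟩

/-- The natural partial order on the inverse semigroup `𝓘_γ^n`:
`α ≼ β` iff the graph of `α` is contained in the graph of `β`. -/
instance : PartialOrder (SymInvSg γ n) where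
  le a b := a.graph ⊆ b.graph
  le_refl a := subset_rfl
  le_trans a b c h₁ h₂ := Set.Subset.trans h₁ h₂
  le_antisymm a b h₁ h₂ := ext' (subset_antisymm h₁ h₂)

/-- The rank of a partial bijection: the cardinality of its domain
(equivalently, of its graph). -/
noncomputable def rank (a : SymInvSg γ n) : ℕ := a.graph.ncard

/-- `𝓘_A^n`: the subsemigroup of partial bijections with domain and range inside `A`. -/
def restrictedTo (A : Set γ) : Set (SymInvSg γ n) :=
  {α | ∀ p ∈ α.graph, p.1 ∈ A ∧ p.2 ∈ A}

end SymInvSg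

/-- A topology is shift-continuous when all left and right translations are continuous,
i.e. the space is a semitopological semigroup. -/
def ShiftContinuous (X : Type*) [TopologicalSpace X] [Mul X] : Prop :=
  ∀ a : X, Continuous (fun x => a * x) ∧ Continuous (fun x => x * a)

/-- A space is feebly compact if every locally finite family of nonempty open sets is finite. -/
def FeeblyCompact (X : Type*) [TopologicalSpace X] : Prop :=
  ∀ F : Set (Set X), (∀ U ∈ F, IsOpen U ∧ U.Nonempty) →
    LocallyFinite (fun U : F => (U : Set X)) → F.Finite

/-- A space is sequentially pracompact if it has a dense subset `D` such that every
sequence in `D` has a convergent subsequence. -/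
def SequentiallyPracompact (X : Type*) [TopologicalSpace X] : Prop :=
  ∃ D : Set X, Dense D ∧ ∀ u : ℕ → X, (∀ k, u k ∈ D) →
    ∃ (x : X) (φ : ℕ → ℕ), StrictMono φ ∧ Filter.Tendsto (u ∘ φ) Filter.atTop (nhds x)

/-- A space is totally countably pracompact if it has a dense subset `D` such that every
sequence in `D` has a subsequence whose closure is compact. -/
def TotallyCountablyPracompact (X : Type*) [TopologicalSpace X] : Prop :=
  ∃ D : Set X, Dense D ∧ ∀ u : ℕ → X, (∀ k, u k ∈ D) →
    ∃ φ : ℕ → ℕ, StrictMono φ ∧ IsCompact (closure (Set.range (u ∘ φ)))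

/-- A space is countably pracompact if it has a dense subset `A` such that every infinite
subset of `A` has an accumulation point in the space. -/
def CountablyPracompact (X : Type*) [TopologicalSpace X] : Prop :=
  ∃ A : Set X, Dense A ∧ ∀ B ⊆ A, B.Infinite → ∃ x : X, AccPt x (Filter.principal B)

/-- A space is ω-bounded-pracompact if it has a dense subset `D` such that every countable
subset of `D` has compact closure. -/
def OmegaBoundedPracompact (X : Type*) [TopologicalSpace X] : Prop :=
  ∃ D : Set X, Dense D ∧ ∀ C ⊆ D, C.Countable → IsCompact (closure C)

/-- A space is feebly ω-bounded if for every sequence of nonempty open sets there is a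
compact set meeting all of them. -/
def FeeblyOmegaBounded (X : Type*) [TopologicalSpace X] : Prop :=
  ∀ U : ℕ → Set X, (∀ k, IsOpen (U k) ∧ (U k).Nonempty) →
    ∃ K : Set X, IsCompact K ∧ ∀ k, (K ∩ U k).Nonempty

theorem OmegaBoundedPracompact.feeblyOmegaBounded {X : Type*} [TopologicalSpace X]
    (h : OmegaBoundedPracompact X) : FeeblyOmegaBounded X := by
  obtain ⟨D, hD, hcompact⟩ := h
  intro U hU
  choose d hdU hdD using fun k => hD.inter_open_nonempty (U k) (hU k).1 (hU k).2
  exact ⟨closure (range d), hcompact _ (range_subset_iff.2 hdD) (countable_range d),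
    fun k => ⟨d k, subset_closure (mem_range_self k), hdU k⟩⟩

namespace FeeblyOmegaBounded

variable {X : Type*} [TopologicalSpace X]

theorem exists_isCompact_forall_mem {ι : Type*} [Countable ι] (h : FeeblyOmegaBounded X)
    {u : ι → X} (hu : ∀ i, IsOpen {u i}) : ∃ K, IsCompact K ∧ ∀ i, u i ∈ K := by
  cases isEmpty_or_nonempty ι
  · exact ⟨∅, isCompact_empty, isEmptyElim⟩
  obtain ⟨e, he⟩ := exists_surjective_nat ι
  obtain ⟨K, hK, hKu⟩ := h (fun k => {u (e k)}) fun k => ⟨hu _, singleton_nonempty _⟩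
  exact ⟨K, hK, he.forall.2 fun k => inter_singleton_nonempty.1 (hKu k)⟩

theorem exists_isCompact_forall_mem_of_mem_seqClosure {ι : Type*} [Countable ι] [T2Space X]
    (h : FeeblyOmegaBounded X) {u : ι → X} (hu : ∀ i, u i ∈ seqClosure {x | IsOpen {x}}) :
    ∃ K, IsCompact K ∧ ∀ i, u i ∈ K := by
  choose v hv hvu using hu
  obtain ⟨K, hK, hvK⟩ := h.exists_isCompact_forall_mem (u := fun q : ι × ℕ => v q.1 q.2)
    fun q => hv q.1 q.2
  exact ⟨K, hK, fun i => hK.isClosed.mem_of_tendsto (hvu i) (.of_forall fun j => hvK (i, j))⟩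

end FeeblyOmegaBounded

namespace SymInvSg

variable {γ : Type*} {n : ℕ}

theorem rank_le (α : SymInvSg γ n) : rank α ≤ n :=
  α.card_le'

theorem isMax_of_rank_eq {α : SymInvSg γ n} (hα : rank α = n) : IsMax α := fun β hαβ =>
  (Set.eq_of_subset_of_ncard_le hαβ (β.rank_le.trans_eq hα.symm) β.finite').ge

/-- The rank-one partial bijection `{x} → {y}` for `p = (x, y)`. For `x = y` it is the idempotent
that cuts a partial bijection down to `x` on either side. -/
def single (hn : 0 < n) (p : γ × γ) : SymInvSg γ n where
  graph := {p}
  inj' := by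
    rintro x y x' y' rfl h
    obtain ⟨rfl, rfl⟩ := Prod.mk.inj h
    simp only
  finite' := finite_singleton p
  card_le' := (ncard_singleton p).trans_le hn

theorem mem_graph_single_mul_mul_single (hn : 0 < n) {x y : γ} {β : SymInvSg γ n} {q : γ × γ} :
    q ∈ (single hn (x, x) * β * single hn (y, y)).graph ↔ q = (x, y) ∧ (x, y) ∈ β.graph := by
  obtain ⟨u, v⟩ := q
  simp only [mul_graph, single, mem_ofPred_eq, mem_singleton_iff, Prod.mk.injEq]
  grind

theorem single_mul_mul_single_eq_single_iff (hn : 0 < n) {x y : γ} {β : SymInvSg γ n} :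
    single hn (x, x) * β * single hn (y, y) = single hn (x, y) ↔ (x, y) ∈ β.graph := by
  refine ⟨fun h => ?_, fun h => ext' <| Set.ext fun q => ?_⟩
  · have hmem : (x, y) ∈ (single hn (x, y)).graph := mem_singleton (x, y)
    rw [← h] at hmem
    exact ((mem_graph_single_mul_mul_single hn).1 hmem).2
  · rw [mem_graph_single_mul_mul_single, and_iff_left h]
    rfl

theorem single_mul_mul_single_eq_zero_iff (hn : 0 < n) {x y : γ} {β : SymInvSg γ n} :
    single hn (x, x) * β * single hn (y, y) = 0 ↔ (x, y) ∉ β.graph := by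
  refine ⟨fun h hxy => ?_, fun h => ext' <| eq_empty_of_forall_notMem fun q hq => ?_⟩
  · have hmem := (mem_graph_single_mul_mul_single hn).2 ⟨rfl, hxy⟩
    rw [h] at hmem
    exact hmem
  · exact h ((mem_graph_single_mul_mul_single hn).1 hq).2

/-- A Δ-system of partial bijections with kernel `α`: all members extend `α`, and no pair outside
`α` belongs to two of them. When `𝓘_γ^n` is feebly ω-bounded, such sequences converge to `α`. -/
structure IsSunflower (α : SymInvSg γ n) (u : ℕ → SymInvSg γ n) : Prop where
  kernel_le : ∀ i, α ≤ u i
  inter_subset : ∀ ⦃i j⦄, i < j → (u i).graph ∩ (u j).graph ⊆ α.graph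

theorem exists_isSunflower_of_forall_finite {α : SymInvSg γ n} {s : Set (SymInvSg γ n)}
    (h : ∀ F : Set (γ × γ), F.Finite → ∃ β ∈ s, α ≤ β ∧ F ∩ β.graph ⊆ α.graph) :
    ∃ u : ℕ → SymInvSg γ n, (∀ i, u i ∈ s) ∧ IsSunflower α u := by
  obtain ⟨u, hu, hdisj⟩ := exists_seq_of_forall_finset_exists
    (fun β => β ∈ s ∧ α ≤ β) (fun β β' => β.graph ∩ β'.graph ⊆ α.graph) fun t _ => by
      obtain ⟨β, hβs, hαβ, hβ⟩ := h (⋃ β ∈ t, β.graph) (t.finite_toSet.biUnion fun β _ => β.finite')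
      exact ⟨β, ⟨hβs, hαβ⟩, fun β' hβ' =>
        (inter_subset_inter_left _ (subset_biUnion_of_mem (u := graph) hβ')).trans hβ⟩
  exact ⟨u, fun i => (hu i).1, fun i => (hu i).2, hdisj⟩

theorem ncard_graph_union_diag {α : SymInvSg γ n} {t : Finset γ}
    (ht : Disjoint (t : Set γ) (Prod.fst '' α.graph)) :
    (α.graph ∪ (fun x => (x, x)) '' (t : Set γ)).ncard = rank α + t.card := by
  have hdisj : Disjoint α.graph ((fun x => (x, x)) '' (t : Set γ)) := by
    rw [disjoint_right]
    rintro _ ⟨x, hx, rfl⟩ h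
    exact disjoint_left.1 ht hx (mem_image_of_mem Prod.fst h)
  rw [ncard_union_eq hdisj α.finite' (t.finite_toSet.image _),
    ncard_image_of_injective _ fun _ _ h => (Prod.mk.inj h).1, ncard_coe_finset, rank]

/-- The extension of `α` by the identity of a finite set `t` that avoids the domain and the range of
`α`; it raises the rank without leaving `𝓘_A^n` when `t ⊆ A`. -/
def adjoinId (α : SymInvSg γ n) (t : Finset γ)
    (ht : Disjoint (t : Set γ) (Prod.fst '' α.graph ∪ Prod.snd '' α.graph))
    (hcard : rank α + t.card ≤ n) : SymInvSg γ n where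
  graph := α.graph ∪ (fun x => (x, x)) '' (t : Set γ)
  inj' := by
    have hdom {x y} (hx : x ∈ t) : (x, y) ∉ α.graph := fun h =>
      disjoint_left.1 ht hx (.inl (mem_image_of_mem Prod.fst h))
    have hran {x y} (hy : y ∈ t) : (x, y) ∉ α.graph := fun h =>
      disjoint_left.1 ht hy (.inr (mem_image_of_mem Prod.snd h))
    rintro x y x' y' (h | ⟨z, hz, h⟩) (h' | ⟨z', hz', h'⟩)
    · exact α.inj' h h'
    · obtain ⟨rfl, rfl⟩ := Prod.mk.inj h'
      exact iff_of_false (fun e => hdom hz' (e ▸ h)) fun e => hran hz' (e ▸ h)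
    · obtain ⟨rfl, rfl⟩ := Prod.mk.inj h
      exact iff_of_false (fun e => hdom hz (e ▸ h')) fun e => hran hz (e ▸ h')
    · obtain ⟨rfl, rfl⟩ := Prod.mk.inj h
      obtain ⟨rfl, rfl⟩ := Prod.mk.inj h'
      exact Iff.rfl
  finite' := α.finite'.union (t.finite_toSet.image _)
  card_le' := (ncard_graph_union_diag (ht.mono_right subset_union_left)).trans_le hcard

theorem exists_full_rank_extension {A : Set γ} (hA : A.Infinite) {α : SymInvSg γ n}
    (hα : α ∈ (restrictedTo A : Set (SymInvSg γ n))) {F : Set (γ × γ)} (hF : F.Finite) :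
    ∃ β ∈ restrictedTo A ∩ {β : SymInvSg γ n | rank β = n},
      α ≤ β ∧ F ∩ β.graph ⊆ α.graph := by
  have hfin : (Prod.fst '' α.graph ∪ Prod.snd '' α.graph ∪ Prod.fst '' F).Finite :=
    ((α.finite'.image _).union (α.finite'.image _)).union (hF.image _)
  obtain ⟨t, htsub, htcard⟩ := (hA.sdiff hfin).exists_subset_card_eq (n - rank α)
  have ht : Disjoint (t : Set γ) (Prod.fst '' α.graph ∪ Prod.snd '' α.graph) :=
    disjoint_left.2 fun x hx h => (htsub hx).2 (.inl h)
  have hcard : rank α + t.card = n := htcard ▸ Nat.add_sub_of_le α.rank_le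
  refine ⟨α.adjoinId t ht hcard.le, ⟨?_, ?_⟩, subset_union_left, ?_⟩
  · rintro p (hp | ⟨x, hx, rfl⟩)
    · exact hα p hp
    · exact ⟨(htsub hx).1, (htsub hx).1⟩
  · exact (ncard_graph_union_diag (ht.mono_right subset_union_left)).trans hcard
  · rintro p ⟨hpF, hp | ⟨x, hx, rfl⟩⟩
    · exact hp
    · exact absurd (.inr (mem_image_of_mem Prod.fst hpF)) (htsub hx).2

theorem encard_graph_le (α : SymInvSg γ n) : α.graph.encard ≤ n := by
  rw [← α.finite'.cast_ncard_eq]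
  exact_mod_cast α.rank_le

theorem exists_forall_mem_graph_iff_eventually (f : Ultrafilter (SymInvSg γ n)) :
    ∃ α : SymInvSg γ n, ∀ p, p ∈ α.graph ↔ ∀ᶠ β : SymInvSg γ n in f, p ∈ β.graph := by
  set g : Set (γ × γ) := {p | ∀ᶠ β : SymInvSg γ n in f, p ∈ β.graph}
  have hencard : g.encard ≤ n := by
    by_contra! hlt
    obtain ⟨t, htg, htcard⟩ := exists_subset_encard_eq (Order.add_one_le_of_lt hlt)
    have ht : t.Finite := finite_of_encard_eq_coe (k := n + 1) (mod_cast htcard)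
    obtain ⟨β, htβ⟩ := ((eventually_all_finite ht).2 htg).exists
    have hle : ((n + 1 : ℕ) : ℕ∞) ≤ n := by
      simpa only [htcard, Nat.cast_add_one] using (encard_le_encard htβ).trans β.encard_graph_le
    exact n.lt_irrefl (ENat.natCast_le_natCast.1 hle)
  have hg : g.Finite := finite_of_encard_le_coe hencard
  refine ⟨⟨g, fun x y x' y' h h' => ?_, hg, ?_⟩, fun p => Iff.rfl⟩
  · obtain ⟨β, hβ, hβ'⟩ := (h.and h').exists
    exact β.inj' hβ hβ'
  · exact_mod_cast hg.cast_ncard_eq.trans_le hencard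

theorem exists_isSunflower_of_mem_ultrafilter {f : Ultrafilter (SymInvSg γ n)}
    {α : SymInvSg γ n} (hα : ∀ p, p ∈ α.graph ↔ ∀ᶠ β : SymInvSg γ n in f, p ∈ β.graph)
    {s : Set (SymInvSg γ n)} (hs : s ∈ f) :
    ∃ u : ℕ → SymInvSg γ n, (∀ i, u i ∈ s) ∧ IsSunflower α u := by
  refine exists_isSunflower_of_forall_finite fun F hF => ?_
  have hmem : ∀ᶠ β in f, β ∈ s := hs
  have hge : ∀ᶠ β in f, α ≤ β := (eventually_all_finite α.finite').2 fun p hp => (hα p).1 hp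
  have havoid : ∀ᶠ β : SymInvSg γ n in f, ∀ p ∈ F, p ∈ β.graph → p ∈ α.graph := by
    refine (eventually_all_finite hF).2 fun p _ => ?_
    by_cases hp : p ∈ α.graph
    · exact .of_forall fun _ _ => hp
    · exact (Ultrafilter.eventually_not.2 (mt (hα p).2 hp)).mono fun _ h h' => absurd h' h
  obtain ⟨β, hβs, hαβ, hβF⟩ := (hmem.and (hge.and havoid)).exists
  exact ⟨β, hβs, hαβ, fun p hp => hβF p hp.1 hp.2⟩

section Topology

variable [TopologicalSpace (SymInvSg γ n)] [T1Space (SymInvSg γ n)]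

theorem isClopen_mem_graph (hsc : ShiftContinuous (SymInvSg γ n)) (p : γ × γ) :
    IsClopen {β : SymInvSg γ n | p ∈ β.graph} := by
  obtain ⟨x, y⟩ := p
  rcases n.eq_zero_or_pos with rfl | hn
  · have hempty (β : SymInvSg γ 0) : β.graph = ∅ :=
      (ncard_eq_zero β.finite').1 (Nat.le_zero.1 β.rank_le)
    simp only [hempty, mem_empty_iff_false, ofPred_false, isClopen_empty]
  have hcont : Continuous fun β : SymInvSg γ n => single hn (x, x) * β * single hn (y, y) :=
    (hsc (single hn (y, y))).2.comp (hsc (single hn (x, x))).1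
  constructor
  · simpa only [preimage, mem_singleton_iff, single_mul_mul_single_eq_single_iff] using
      (isClosed_singleton (x := single hn (x, y))).preimage hcont
  · simpa only [preimage, mem_compl_iff, mem_singleton_iff, single_mul_mul_single_eq_zero_iff,
      not_not] using (isOpen_compl_singleton (x := (0 : SymInvSg γ n))).preimage hcont

theorem isClosed_restrictedTo (hsc : ShiftContinuous (SymInvSg γ n)) (A : Set γ) :
    IsClosed (restrictedTo A : Set (SymInvSg γ n)) := by
  have h : (restrictedTo A : Set (SymInvSg γ n)) =
      ⋂ p ∈ (A ×ˢ A)ᶜ, {β | p ∈ β.graph}ᶜ := by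
    ext β
    simp only [restrictedTo, mem_iInter, mem_ofPred_eq, mem_compl_iff, mem_prod, not_imp_not]
  rw [h]
  exact isClosed_biInter fun p _ => (isClopen_mem_graph hsc p).compl.isClosed

theorem isOpen_singleton_of_isMax (hsc : ShiftContinuous (SymInvSg γ n)) {α : SymInvSg γ n}
    (hα : IsMax α) : IsOpen {α} := by
  have hIci : Ici α = ⋂ p ∈ α.graph, {β | p ∈ β.graph} := by
    ext β
    simp only [mem_iInter]
    rfl
  rw [← hα.Ici_eq, hIci]
  exact α.finite'.isOpen_biInter fun p _ => (isClopen_mem_graph hsc p).isOpen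

theorem t2Space (hsc : ShiftContinuous (SymInvSg γ n)) : T2Space (SymInvSg γ n) := by
  have : TotallySeparatedSpace (SymInvSg γ n) := by
    rw [totallySeparatedSpace_iff_exists_isClopen]
    intro α β hαβ
    obtain ⟨p, hp⟩ : ∃ p, ¬(p ∈ α.graph ↔ p ∈ β.graph) :=
      not_forall.1 fun h => hαβ (ext' (Set.ext h))
    by_cases hpα : p ∈ α.graph
    · exact ⟨_, isClopen_mem_graph hsc p, hpα, fun hpβ => hp (iff_of_true hpα hpβ)⟩
    · exact ⟨_, (isClopen_mem_graph hsc p).compl, hpα,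
        fun hpβ => hp (iff_of_false hpα hpβ)⟩
  infer_instance

theorem IsSunflower.tendsto_of_isCompact (hsc : ShiftContinuous (SymInvSg γ n))
    {α : SymInvSg γ n} {u : ℕ → SymInvSg γ n} (hu : IsSunflower α u) {K : Set (SymInvSg γ n)}
    (hK : IsCompact K) (huK : ∀ i, u i ∈ K) : Tendsto u atTop (𝓝 α) := by
  refine hK.tendsto_nhds_of_unique_mapClusterPt (.of_forall huK) fun β _ hβ => ?_
  refine ext' (Subset.antisymm (fun p hp => ?_) (fun p hp => ?_))
  · have hfreq : ∃ᶠ i in atTop, p ∈ (u i).graph :=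
      hβ.frequently ((isClopen_mem_graph hsc p).isOpen.mem_nhds hp)
    obtain ⟨i, hi⟩ := hfreq.exists
    obtain ⟨j, hj, hij⟩ := (hfreq.and_eventually (eventually_gt_atTop i)).exists
    exact hu.inter_subset hij ⟨hi, hj⟩
  · by_contra hpβ
    have hfreq : ∃ᶠ i in atTop, p ∉ (u i).graph :=
      hβ.frequently ((isClopen_mem_graph hsc p).compl.isOpen.mem_nhds hpβ)
    obtain ⟨i, hi⟩ := hfreq.exists
    exact hi (hu.kernel_le i hp)

theorem restrictedTo_subset_seqClosure_rank_eq (hsc : ShiftContinuous (SymInvSg γ n))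
    (hω : FeeblyOmegaBounded (SymInvSg γ n)) {A : Set γ} (hA : A.Infinite) :
    (restrictedTo A : Set (SymInvSg γ n)) ⊆
      seqClosure (restrictedTo A ∩ {β : SymInvSg γ n | rank β = n}) := by
  intro α hα
  obtain ⟨u, hu, hsun⟩ :=
    exists_isSunflower_of_forall_finite fun F hF => exists_full_rank_extension hA hα hF
  obtain ⟨K, hK, huK⟩ := hω.exists_isCompact_forall_mem fun i =>
    isOpen_singleton_of_isMax hsc (isMax_of_rank_eq (hu i).2)
  exact ⟨u, hu, hsun.tendsto_of_isCompact hsc hK huK⟩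

theorem mem_seqClosure_isOpen_singleton [Infinite γ]
    (hsc : ShiftContinuous (SymInvSg γ n)) (hω : FeeblyOmegaBounded (SymInvSg γ n))
    (α : SymInvSg γ n) : α ∈ seqClosure {β : SymInvSg γ n | IsOpen {β}} := by
  obtain ⟨u, hu, hlim⟩ := restrictedTo_subset_seqClosure_rank_eq hsc hω infinite_univ
    (show α ∈ restrictedTo univ from fun _ _ => ⟨mem_univ _, mem_univ _⟩)
  exact ⟨u, fun i => isOpen_singleton_of_isMax hsc (isMax_of_rank_eq (hu i).2), hlim⟩

theorem IsSunflower.tendsto [Infinite γ] (hsc : ShiftContinuous (SymInvSg γ n))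
    (hω : FeeblyOmegaBounded (SymInvSg γ n)) {α : SymInvSg γ n} {u : ℕ → SymInvSg γ n}
    (hu : IsSunflower α u) : Tendsto u atTop (𝓝 α) := by
  have := t2Space hsc
  obtain ⟨K, hK, huK⟩ := hω.exists_isCompact_forall_mem_of_mem_seqClosure (u := u) fun i =>
    mem_seqClosure_isOpen_singleton hsc hω (u i)
  exact hu.tendsto_of_isCompact hsc hK huK

theorem compactSpace [Infinite γ] (hsc : ShiftContinuous (SymInvSg γ n))
    (hω : FeeblyOmegaBounded (SymInvSg γ n)) : CompactSpace (SymInvSg γ n) := by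
  refine ⟨isCompact_iff_ultrafilter_le_nhds'.2 fun f _ => ?_⟩
  obtain ⟨α, hα⟩ := exists_forall_mem_graph_iff_eventually f
  refine ⟨α, mem_univ α, fun U hU => ?_⟩
  by_contra hUf
  obtain ⟨u, huU, hsun⟩ :=
    exists_isSunflower_of_mem_ultrafilter hα (Ultrafilter.compl_mem_iff_notMem.2 hUf)
  obtain ⟨i, hi⟩ := ((hsun.tendsto hsc hω).eventually_mem hU).exists
  exact huU i hi

end Topology

end SymInvSg

theorem dense_top_rank_and_isCompact_restrictedTo_general {γ : Type*} {n : ℕ} (hn : 0 < n)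
    [TopologicalSpace (SymInvSg γ n)] [T1Space (SymInvSg γ n)]
    (hsc : ShiftContinuous (SymInvSg γ n)) (hω : FeeblyOmegaBounded (SymInvSg γ n))
    {A : Set γ} (hA : A.Infinite) :
    (SymInvSg.restrictedTo A : Set (SymInvSg γ n)) ⊆
      closure ((SymInvSg.restrictedTo A : Set (SymInvSg γ n)) \
        {α : SymInvSg γ n | SymInvSg.rank α ≤ n - 1}) ∧
    IsCompact (SymInvSg.restrictedTo A : Set (SymInvSg γ n)) := by
  have : Infinite γ := infinite_univ_iff.1 (hA.mono (subset_univ A))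
  have := SymInvSg.compactSpace hsc hω
  refine ⟨?_, (SymInvSg.isClosed_restrictedTo hsc A).isCompact⟩
  calc SymInvSg.restrictedTo A
    _ ⊆ seqClosure (SymInvSg.restrictedTo A ∩ {α : SymInvSg γ n | SymInvSg.rank α = n}) :=
        SymInvSg.restrictedTo_subset_seqClosure_rank_eq hsc hω hA
    _ ⊆ closure (SymInvSg.restrictedTo A ∩ {α : SymInvSg γ n | SymInvSg.rank α = n}) :=
        seqClosure_subset_closure
    _ ⊆ closure (SymInvSg.restrictedTo A \ {α : SymInvSg γ n | SymInvSg.rank α ≤ n - 1}) :=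
        closure_mono fun α ⟨hαA, (hα : SymInvSg.rank α = n)⟩ =>
          ⟨hαA, fun (h : SymInvSg.rank α ≤ n - 1) => by lia⟩

/-- If `𝓘_λ^n` is an ω-bounded-pracompact `T₁`-semitopological semigroup
(`n` a positive integer, `λ` an infinite cardinal) and `A ⊆ λ` is countably infinite, then
`𝓘_A^n ∖ 𝓘_A^{n-1}` is dense in the subspace `𝓘_A^n`, and `𝓘_A^n` is compact. -/
theorem dense_top_rank_and_isCompact_restrictedTo {γ : Type*} [Infinite γ] {n : ℕ}
    (hn : 0 < n)
    [TopologicalSpace (SymInvSg γ n)] [T1Space (SymInvSg γ n)]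
    (hsc : ShiftContinuous (SymInvSg γ n))
    (hωb : OmegaBoundedPracompact (SymInvSg γ n))
    (A : Set γ) (hAc : A.Countable) (hAi : A.Infinite) :
    (SymInvSg.restrictedTo A : Set (SymInvSg γ n)) ⊆
      closure ((SymInvSg.restrictedTo A : Set (SymInvSg γ n)) \
        {α : SymInvSg γ n | SymInvSg.rank α ≤ n - 1}) ∧
    IsCompact (SymInvSg.restrictedTo A : Set (SymInvSg γ n)) :=
  dense_top_rank_and_isCompact_restrictedTo_general hn hsc hωb.feeblyOmegaBounded hAi
end

section
/- Let n be a positive integer and λ an infinite cardinal, and let τ be a feebly compact shift-continuous T₁-topology on 𝓘_λ^n. If {χ_p : p ∈ ℕ} is a sequence of points of 𝓘_λ^n ∖ 𝓘_λ^{n−1} such that for every nonzero element η ∈ 𝓘_λ^n the set ↑_≼ η ∩ {χ_p : p ∈ ℕ} is finite, then {𝟎} ∪ {χ_p : p ∈ ℕ} is a compact subset of (𝓘_λ^n, τ). -/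
/-!
In the inverse semigroup `𝓘_γ^n` we have `α ≼ x` iff `α⁻¹ x α⁻¹ = α⁻¹`. The map `x ↦ α⁻¹ x α⁻¹` is
continuous and takes only finitely many values, so its fibres are open in a `T₁` topology; hence
every up-set `↑α` is open. For `α` of rank `n` this up-set is `{α}`, so `α` is an isolated point.

If a neighbourhood `U` of `𝟎` missed infinitely many `χ_p`, their singletons would form an infinite
family of open sets that is locally finite: near `𝟎` because of `U`, and near `η ≠ 𝟎` because of
`↑η`. Feeble compactness forbids this, so the set of points `χ_p` converges to `𝟎` along its
cofinite filter.
-/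

open Set Topology Filter

theorem isLocallyConstant_of_finite_range {X Y : Type*} [TopologicalSpace X] [TopologicalSpace Y]
    [T1Space Y] {f : X → Y} (hf : Continuous f) (hfin : (range f).Finite) :
    IsLocallyConstant f := by
  intro s
  have hclosed : IsClosed (sᶜ ∩ range f) := (hfin.subset inter_subset_right).isClosed
  simpa only [preimage_inter_range, preimage_compl, isClosed_compl_iff] using hclosed.preimage hf

namespace FeeblyCompact

variable {X : Type*} [TopologicalSpace X]

theorem finite_of_locallyFinite (hX : FeeblyCompact X) {ι : Type*} {U : ι → Set X}
    (hU : ∀ i, IsOpen (U i) ∧ (U i).Nonempty) (hinj : Function.Injective U)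
    (hloc : LocallyFinite U) : Finite ι :=
  have : Finite (range U) := hX (range U) (forall_mem_range.2 hU) hloc.on_range
  Finite.of_injective (rangeFactorization U) (rangeFactorization_injective.2 hinj)

theorem finite_of_isOpen_singleton (hX : FeeblyCompact X) {s : Set X}
    (hs : ∀ x ∈ s, IsOpen {x}) (hloc : ∀ x, ∃ V ∈ 𝓝 x, (V ∩ s).Finite) : s.Finite := by
  refine hX.finite_of_locallyFinite (U := fun x : s ↦ {x.1})
    (fun x ↦ ⟨hs x x.2, singleton_nonempty _⟩)
    (singleton_injective.comp Subtype.val_injective) fun x ↦ ?_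
  obtain ⟨V, hV, hfin⟩ := hloc x
  refine ⟨V, hV, (hfin.preimage Subtype.val_injective.injOn).subset ?_⟩
  exact fun y hy ↦ ⟨singleton_inter_nonempty.1 hy, y.2⟩

theorem tendsto_val_cofinite_of_isOpen_singleton (hX : FeeblyCompact X) {s : Set X} {x : X}
    (hs : ∀ y ∈ s, IsOpen {y}) (hloc : ∀ y ≠ x, ∃ V ∈ 𝓝 y, (V ∩ s).Finite) :
    Tendsto (Subtype.val : s → X) cofinite (𝓝 x) := by
  intro U hU
  have hdiff : (s \ U).Finite := by
    refine hX.finite_of_isOpen_singleton (fun y hy ↦ hs y hy.1) fun y ↦ ?_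
    obtain rfl | hy := eq_or_ne y x
    · exact ⟨U, hU, by simp⟩
    · obtain ⟨V, hV, hfin⟩ := hloc y hy
      exact ⟨V, hV, hfin.subset (inter_subset_inter_right V sdiff_subset)⟩
  exact (hdiff.preimage Subtype.val_injective.injOn).subset fun y hy ↦ ⟨y.2, hy⟩

theorem isCompact_insert_of_isOpen_singleton (hX : FeeblyCompact X) {s : Set X} {x : X}
    (hs : ∀ y ∈ s, IsOpen {y}) (hloc : ∀ y ≠ x, ∃ V ∈ 𝓝 y, (V ∩ s).Finite) :
    IsCompact (insert x s) := by
  simpa only [Subtype.range_val] using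
    (hX.tendsto_val_cofinite_of_isOpen_singleton hs hloc).isCompact_insert_range_of_cofinite

end FeeblyCompact

namespace SymInvSg

variable {γ : Type*} {n : ℕ}

/-- The inverse of a partial bijection, making `𝓘_γ^n` an inverse semigroup: its graph is the graph
of the original map with the two coordinates swapped. -/
instance : Inv (SymInvSg γ n) where
  inv a :=
    { graph := Prod.swap ⁻¹' a.graph
      inj' := fun _ _ _ _ h h' ↦ (a.inj' h h').symm
      finite' := a.finite'.preimage Prod.swap_injective.injOn
      card_le' := by
        rw [← image_swap_eq_preimage_swap, ncard_image_of_injective _ Prod.swap_injective]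
        exact a.card_le' }

theorem mem_mul_graph {a b : SymInvSg γ n} {x z : γ} :
    (x, z) ∈ (a * b).graph ↔ ∃ y, (x, y) ∈ a.graph ∧ (y, z) ∈ b.graph :=
  Iff.rfl

theorem mem_inv_graph {a : SymInvSg γ n} {x y : γ} : (x, y) ∈ a⁻¹.graph ↔ (y, x) ∈ a.graph :=
  Iff.rfl

theorem mem_inv_mul_mul_inv_graph {a x : SymInvSg γ n} {u v : γ} :
    (u, v) ∈ (a⁻¹ * x * a⁻¹).graph ↔
      ∃ p q, (p, u) ∈ a.graph ∧ (p, q) ∈ x.graph ∧ (v, q) ∈ a.graph := by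
  simp only [mem_mul_graph, mem_inv_graph]
  grind

theorem inv_mul_mul_inv_eq_inv_iff {a x : SymInvSg γ n} : a⁻¹ * x * a⁻¹ = a⁻¹ ↔ a ≤ x := by
  refine ⟨fun h ↦ ?_, fun h ↦ ext' ?_⟩
  · rintro ⟨u, v⟩ huv
    have hvu : (v, u) ∈ (a⁻¹ * x * a⁻¹).graph := by rwa [h, mem_inv_graph]
    obtain ⟨p, q, hpv, hpq, huq⟩ := mem_inv_mul_mul_inv_graph.1 hvu
    obtain rfl : p = u := (a.inj' hpv huv).2 rfl
    obtain rfl : q = v := (a.inj' huq huv).1 rfl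
    exact hpq
  · ext ⟨u, v⟩
    rw [mem_inv_mul_mul_inv_graph, mem_inv_graph]
    refine ⟨?_, fun hvu ↦ ⟨v, u, hvu, h hvu, hvu⟩⟩
    rintro ⟨p, q, hpu, hpq, hvq⟩
    obtain rfl : u = q := (x.inj' (h hpu) hpq).1 rfl
    exact hvq

theorem finite_range_mul_mul (a b : SymInvSg γ n) : (range fun x ↦ a * x * b).Finite := by
  refine .of_finite_image (f := graph) ?_ fun _ _ _ _ ↦ ext'
  refine ((a.finite'.image Prod.fst).prod (b.finite'.image Prod.snd)).finite_subsets.subset ?_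
  rintro _ ⟨_, ⟨x, rfl⟩, rfl⟩ ⟨u, v⟩ ⟨q, ⟨p, hup, -⟩, hqv⟩
  exact ⟨⟨(u, p), hup, rfl⟩, ⟨(q, v), hqv, rfl⟩⟩

theorem isMax_of_rank_eq_s14 {a : SymInvSg γ n} (ha : a.rank = n) : IsMax a := fun b hab ↦
  (eq_of_subset_of_ncard_le hab (b.card_le'.trans ha.ge) b.finite').ge

variable [TopologicalSpace (SymInvSg γ n)] [T1Space (SymInvSg γ n)]

theorem isOpen_Ici (hsc : ShiftContinuous (SymInvSg γ n)) (a : SymInvSg γ n) :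
    IsOpen (Ici a) := by
  have hcont : Continuous fun x ↦ a⁻¹ * x * a⁻¹ := (hsc a⁻¹).2.comp (hsc a⁻¹).1
  have hIci : Ici a = {x | a⁻¹ * x * a⁻¹ = a⁻¹} :=
    Set.ext fun _ ↦ inv_mul_mul_inv_eq_inv_iff.symm
  rw [hIci]
  exact (isLocallyConstant_of_finite_range hcont (finite_range_mul_mul _ _)).isOpen_fiber _

theorem isOpen_singleton_of_rank_eq (hsc : ShiftContinuous (SymInvSg γ n)) {a : SymInvSg γ n}
    (ha : a.rank = n) : IsOpen {a} := by
  rw [← (isMax_of_rank_eq_s14 ha).Ici_eq]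
  exact isOpen_Ici hsc a

end SymInvSg

theorem isCompact_zero_union_range_general {γ : Type*} {n : ℕ}
    [TopologicalSpace (SymInvSg γ n)] [T1Space (SymInvSg γ n)]
    (hsc : ShiftContinuous (SymInvSg γ n))
    (hfc : FeeblyCompact (SymInvSg γ n))
    {ι : Sort*} (χ : ι → SymInvSg γ n) (hχ : ∀ i, (χ i).rank = n)
    (hfin : ∀ η : SymInvSg γ n, η ≠ 0 → (Ici η ∩ range χ).Finite) :
    IsCompact ({0} ∪ range χ : Set (SymInvSg γ n)) := by
  rw [singleton_union]
  refine hfc.isCompact_insert_of_isOpen_singleton ?isolated ?locallyFinite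
  case isolated =>
    exact forall_mem_range.2 fun i ↦ SymInvSg.isOpen_singleton_of_rank_eq hsc (hχ i)
  case locallyFinite =>
    exact fun η hη ↦ ⟨Ici η, (SymInvSg.isOpen_Ici hsc η).mem_nhds self_mem_Ici, hfin η hη⟩

/-- Let `τ` be a feebly compact shift-continuous `T₁`-topology on `𝓘_λ^n`
(`n` a positive integer, `λ` an infinite cardinal). If `{χ_p : p ∈ ℕ}` is a sequence of
elements of rank exactly `n` such that `↑_≼ η ∩ {χ_p : p ∈ ℕ}` is finite for every nonzero
`η`, then `{𝟎} ∪ {χ_p : p ∈ ℕ}` is compact. -/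
theorem isCompact_zero_union_range {γ : Type*} [Infinite γ] {n : ℕ} (hn : 0 < n)
    [TopologicalSpace (SymInvSg γ n)] [T1Space (SymInvSg γ n)]
    (hsc : ShiftContinuous (SymInvSg γ n))
    (hfc : FeeblyCompact (SymInvSg γ n))
    (χ : ℕ → SymInvSg γ n) (hχ : ∀ p, SymInvSg.rank (χ p) = n)
    (hfin : ∀ η : SymInvSg γ n, η ≠ 0 → (Set.Ici η ∩ Set.range χ).Finite) :
    IsCompact ({0} ∪ Set.range χ : Set (SymInvSg γ n)) :=
  isCompact_zero_union_range_general hsc hfc χ hχ hfin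
end
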